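/- Let h(x) := e^{-r(T−t)} (1/λ)(1−e^{-λ(T−t)}) x (the jump increment of the Theorem 2.1 variance-swap price). Then the quadratic hedging-error functional f(φ) := φ² S² σ_t² − 2 ρ' σ c S Y σ_t φ + λ ∫_{(0,∞)} ( φ S (e^{ρ(1−θ)x} − 1) − (1−θ) h(x) )² ν(dx) + λ ∫_{(0,∞)} ( φ S (e^{ρθx} − 1) − θ h(x) )² νᵇ(dx) attains its unique global minimum over φ ∈ ℝ at φ = Δ := ( ρ' σ σ_t (Y/S) c + A + B ) / ( σ_t² + λ ∫_{(0,∞)} (e^{ρ(1−θ)x} − 1)² ν(dx) + λ ∫_{(0,∞)} (e^{ρθx} − 1)² νᵇ(dx) ), where A := ((1−θ)/S) e^{-r(T−t)} (1−e^{-λ(T−t)}) ∫_{(0,∞)} x (e^{ρ(1−θ)x} − 1) ν(dx) and B := (θ/S) e^{-r(T−t)} (1−e^{-λ(T−t)}) ∫_{(0,∞)} x (e^{ρθx} − 1) νᵇ(dx). (This is Corollary 2.3 of the paper: the risk-minimizing quadratic hedge ratio under the refined BN-S model with the explicit variance-swap price.) -/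

import Mathlib

/-!
Expanding the square in `L²` shows that each jump integral is a quadratic polynomial in the hedge
ratio `φ`. With `N` and `D` the numerator and denominator of `Δ`, the hedging error therefore equals
`S² D φ² - 2 S² N φ + const`, whose vertex is `N / D`; the volatility term makes `D` positive.
-/

open Real MeasureTheory

section QuadraticPolynomial

variable {K : Type*} [Field K] {f : K → K} {a b k : K}

lemma eq_vertex_add_mul_sq (ha : a ≠ 0) (hf : ∀ x, f x = a * x ^ 2 - 2 * b * x + k) (x : K) :
    f x = f (b / a) + a * (x - b / a) ^ 2 := by
  rw [hf, hf]
  field_simp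
  ring

variable [LinearOrder K] [IsStrictOrderedRing K]

lemma vertex_le_and_eq_vertex_of_eq (ha : 0 < a)
    (hf : ∀ x, f x = a * x ^ 2 - 2 * b * x + k) (x : K) :
    f (b / a) ≤ f x ∧ (f x = f (b / a) → x = b / a) := by
  rw [eq_vertex_add_mul_sq ha.ne' hf x]
  refine ⟨le_add_of_nonneg_right (by positivity), fun h ↦ ?_⟩
  have hsq : (x - b / a) ^ 2 = 0 := (mul_eq_zero.mp (add_eq_left.mp h)).resolve_left ha.ne'
  exact sub_eq_zero.mp (pow_eq_zero_iff two_ne_zero |>.mp hsq)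

end QuadraticPolynomial

lemma integral_mul_sub_sq {α : Type*} [MeasurableSpace α] {μ : Measure α} {u h : α → ℝ}
    (hu : MemLp u 2 μ) (hh : MemLp h 2 μ) (a : ℝ) :
    ∫ x, (a * u x - h x) ^ 2 ∂μ =
      a ^ 2 * ∫ x, u x ^ 2 ∂μ - 2 * a * ∫ x, h x * u x ∂μ + ∫ x, h x ^ 2 ∂μ := by
  have huu : Integrable (fun x ↦ a ^ 2 * u x ^ 2) μ := hu.integrable_sq.const_mul _
  have hhu : Integrable (fun x ↦ 2 * a * (h x * u x)) μ := (hh.integrable_mul hu).const_mul _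
  have hdiff : Integrable (fun x ↦ a ^ 2 * u x ^ 2 - 2 * a * (h x * u x)) μ := huu.sub hhu
  calc ∫ x, (a * u x - h x) ^ 2 ∂μ
      = ∫ x, (a ^ 2 * u x ^ 2 - 2 * a * (h x * u x) + h x ^ 2) ∂μ := by
        congr 1 with x
        ring
    _ = a ^ 2 * ∫ x, u x ^ 2 ∂μ - 2 * a * ∫ x, h x * u x ∂μ + ∫ x, h x ^ 2 ∂μ := by
        rw [integral_add hdiff hh.integrable_sq, integral_sub huu hhu,
          integral_const_mul, integral_const_mul]

/-- The increment of the variance-swap price, with time `τ = T - t` left to maturity, caused by a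
jump of size `x` of the variance subordinator. -/
noncomputable def varianceSwapJump (lam r τ x : ℝ) : ℝ :=
  exp (-r * τ) * (1 / lam) * (1 - exp (-lam * τ)) * x

section VarianceSwapJump

variable {μ : Measure ℝ} {lam : ℝ} (r τ w : ℝ)

lemma memLp_mul_varianceSwapJump (hx : Integrable (fun x ↦ x ^ 2) μ) :
    MemLp (fun x ↦ w * varianceSwapJump lam r τ x) 2 μ :=
  (((memLp_two_iff_integrable_sq (by fun_prop)).2 hx).const_mul _).const_mul w

lemma div_mul_integral_varianceSwapJump_mul (hlam : lam ≠ 0) (S : ℝ) (u : ℝ → ℝ) :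
    lam / S * ∫ x, w * varianceSwapJump lam r τ x * u x ∂μ =
      w / S * exp (-r * τ) * (1 - exp (-lam * τ)) * ∫ x, x * u x ∂μ := by
  rw [← integral_const_mul, ← integral_const_mul]
  congr 1 with x
  simp only [varianceSwapJump]
  field_simp

end VarianceSwapJump

lemma memLp_exp_mul_sub_one {μ : Measure ℝ} {k : ℝ}
    (hint : Integrable (fun x ↦ (exp (k * x) - 1) ^ 2) μ) :
    MemLp (fun x ↦ exp (k * x) - 1) 2 μ :=
  (memLp_two_iff_integrable_sq (by fun_prop)).2 hint

theorem quadraticHedge_min_explicit_general {α β : Type*} [MeasurableSpace α] [MeasurableSpace β]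
    {μ : Measure α} {ν : Measure β} {u h : α → ℝ} {v k : β → ℝ}
    (hu : MemLp u 2 μ) (hh : MemLp h 2 μ) (hv : MemLp v 2 ν) (hk : MemLp k 2 ν)
    {lam S σt Y σ ρ' c Δ : ℝ} (hS : S ≠ 0)
    (hD : 0 < σt ^ 2 + lam * (∫ x, u x ^ 2 ∂μ) + lam * ∫ x, v x ^ 2 ∂ν)
    {f : ℝ → ℝ}
    (hf : ∀ φ, f φ = φ ^ 2 * S ^ 2 * σt ^ 2 - 2 * ρ' * σ * c * S * Y * σt * φ
      + lam * ∫ x, (φ * S * u x - h x) ^ 2 ∂μ + lam * ∫ x, (φ * S * v x - k x) ^ 2 ∂ν)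
    (hΔ : Δ = (ρ' * σ * σt * (Y / S) * c
        + lam / S * (∫ x, h x * u x ∂μ) + lam / S * ∫ x, k x * v x ∂ν) /
      (σt ^ 2 + lam * (∫ x, u x ^ 2 ∂μ) + lam * ∫ x, v x ^ 2 ∂ν)) (φ : ℝ) :
    f Δ ≤ f φ ∧ (f φ = f Δ → φ = Δ) := by
  set D := σt ^ 2 + lam * (∫ x, u x ^ 2 ∂μ) + lam * ∫ x, v x ^ 2 ∂ν with hD_def
  set N := ρ' * σ * σt * (Y / S) * c
    + lam / S * (∫ x, h x * u x ∂μ) + lam / S * ∫ x, k x * v x ∂ν with hN_def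
  have hquad : ∀ φ, f φ = S ^ 2 * D * φ ^ 2 - 2 * (S ^ 2 * N) * φ
      + lam * (∫ x, h x ^ 2 ∂μ + ∫ x, k x ^ 2 ∂ν) := fun φ ↦ by
    rw [hf, integral_mul_sub_sq hu hh, integral_mul_sub_sq hv hk, hD_def, hN_def]
    field_simp
    ring
  have hvertex : Δ = S ^ 2 * N / (S ^ 2 * D) := by
    rw [hΔ, mul_div_mul_left _ _ (pow_ne_zero 2 hS)]
  rw [hvertex]
  exact vertex_le_and_eq_vertex_of_eq (by positivity) hquad φ

/-- Corollary 2.3 of the paper: with the explicit variance-swap jump increment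
`h x = exp (-r (T−t)) (1/λ) (1 − exp (-λ (T−t))) x`, the quadratic hedging-error
functional attains its unique global minimum at the explicit hedge ratio Δ. -/
theorem quadraticHedge_min_explicit
    (ν νb : Measure ℝ) (lam S σt Y σ ρ ρ' c θ r t T : ℝ)
    (hlam : 0 < lam) (hS : 0 < S) (hσt : 0 < σt) (hθ0 : 0 ≤ θ) (hθ1 : θ ≤ 1)
    (htT : t ≤ T)
    (hint1 : IntegrableOn (fun x => (Real.exp (ρ * (1 - θ) * x) - 1) ^ 2) (Set.Ioi 0) ν)
    (hint2 : IntegrableOn (fun x => (Real.exp (ρ * θ * x) - 1) ^ 2) (Set.Ioi 0) νb)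
    (hint3 : IntegrableOn (fun x => x ^ 2) (Set.Ioi 0) ν)
    (hint4 : IntegrableOn (fun x => x ^ 2) (Set.Ioi 0) νb)
    (h : ℝ → ℝ)
    (hh : ∀ x : ℝ, h x = Real.exp (-r * (T - t)) * (1 / lam) *
      (1 - Real.exp (-lam * (T - t))) * x)
    (f : ℝ → ℝ)
    (hf : ∀ φ : ℝ, f φ = φ ^ 2 * S ^ 2 * σt ^ 2 - 2 * ρ' * σ * c * S * Y * σt * φ
      + lam * ∫ x in Set.Ioi (0 : ℝ),
          (φ * S * (Real.exp (ρ * (1 - θ) * x) - 1) - (1 - θ) * h x) ^ 2 ∂ν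
      + lam * ∫ x in Set.Ioi (0 : ℝ),
          (φ * S * (Real.exp (ρ * θ * x) - 1) - θ * h x) ^ 2 ∂νb)
    (A B Δ : ℝ)
    (hA : A = ((1 - θ) / S) * Real.exp (-r * (T - t)) * (1 - Real.exp (-lam * (T - t))) *
      ∫ x in Set.Ioi (0 : ℝ), x * (Real.exp (ρ * (1 - θ) * x) - 1) ∂ν)
    (hB : B = (θ / S) * Real.exp (-r * (T - t)) * (1 - Real.exp (-lam * (T - t))) *
      ∫ x in Set.Ioi (0 : ℝ), x * (Real.exp (ρ * θ * x) - 1) ∂νb)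
    (hΔ : Δ = (ρ' * σ * σt * (Y / S) * c + A + B) /
      (σt ^ 2 + lam * (∫ x in Set.Ioi (0 : ℝ), (Real.exp (ρ * (1 - θ) * x) - 1) ^ 2 ∂ν)
        + lam * ∫ x in Set.Ioi (0 : ℝ), (Real.exp (ρ * θ * x) - 1) ^ 2 ∂νb)) :
    ∀ φ : ℝ, f Δ ≤ f φ ∧ (f φ = f Δ → φ = Δ) := by
  obtain rfl : h = varianceSwapJump lam r (T - t) := funext hh
  exact quadraticHedge_min_explicit_general
    (memLp_exp_mul_sub_one hint1) (memLp_mul_varianceSwapJump r (T - t) (1 - θ) hint3)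
    (memLp_exp_mul_sub_one hint2) (memLp_mul_varianceSwapJump r (T - t) θ hint4)
    hS.ne' (by positivity) hf (by
      simp only [hΔ, hA, hB, div_mul_integral_varianceSwapJump_mul _ _ _ hlam.ne'])
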